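/- Let M = (S, A, P, R, H, μ) be a finite MDP with H ≥ 2·ln(8 · (|S|+1)^{4(|S|+1)}) and let ε ∈ (0,1]. For each (s, a) ∈ S × A, let m_ε(s, a) be the largest integer such that there exists a (possibly non-stationary) deterministic policy π_{s,a} with Q^{π_{s,a}}_ε(s, a) ≥ m_ε(s, a). Then for each (s, a) ∈ S × A, Q^{st}_{ε·(|S|+1)^{−12(|S|+1)}/1024}(s, a) ≥ (1/(4096 · |S|^{12|S|})) · ε · m_ε(s, a), where Q^{st}_δ(s, a) is the δ-quantile of the total number of times (s, a) is visited across the combined collection of switched-policy trajectories described in the context. -/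

import Mathlib

open Finset

/-- Extend a trajectory `(s_0, …, s_H)` to a function `ℕ → S` (constant after time `H`). -/
def extT {S : Type} (H : ℕ) (T : Fin (H + 1) → S) : ℕ → S :=
  fun n => T ⟨min n H, Nat.lt_succ_of_le (Nat.min_le_right n H)⟩

/-- Probability of the trajectory with state sequence `f` under the (possibly non-stationary)
deterministic policy `π`: `p(T, M, π) = μ(s_0) · ∏_{h<H} P(s_{h+1} ∣ s_h, π_h(s_h))`. -/
noncomputable def trajP {S A : Type} (μ : S → ℝ) (P : S → A → S → ℝ)
    (π : ℕ → S → A) (H : ℕ) (f : ℕ → S) : ℝ :=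
  μ (f 0) * ∏ h ∈ Finset.range H, P (f h) (π h (f h)) (f (h + 1))

/-- Number of times the state-action pair `z` is visited during the first `K` steps of the
trajectory with state sequence `f`, when actions are chosen by the policy `π`. -/
def nVisits {S A : Type} [DecidableEq S] [DecidableEq A] (π : ℕ → S → A) (K : ℕ)
    (z : S × A) (f : ℕ → S) : ℕ :=
  ∑ h ∈ Finset.range K, if (f h, π h (f h)) = z then 1 else 0

/-- The `d`-quantile `Q_d(X) = sup {x ∣ Pr[X ≥ x] ≥ d}` of the random variable `X` of the random
trajectory induced by executing the policy `π` in the `H`-horizon MDP `(μ, P)`. -/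
noncomputable def quantNS {S A : Type} [Fintype S] (μ : S → ℝ) (P : S → A → S → ℝ)
    (π : ℕ → S → A) (H : ℕ) (X : (ℕ → S) → ℝ) (d : ℝ) : ℝ :=
  sSup {x : ℝ | d ≤ ∑ T : Fin (H + 1) → S,
    if x ≤ X (extT H T) then trajP μ P π H (extT H T) else 0}

/-- Whether the state-action pair `z` has been visited strictly before time `n` in the switched
execution determined by the pair of stationary policies `(π₁, π₂)` along states `f`: one follows
`π₁` until `z` is visited for the first time, and `π₂` afterwards. -/
def swVisited {S A : Type} [DecidableEq S] [DecidableEq A] (z : S × A) (π₁ π₂ : S → A)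
    (f : ℕ → S) : ℕ → Bool
  | 0 => false
  | n + 1 =>
    swVisited z π₁ π₂ f n ||
      decide ((f n, (if swVisited z π₁ π₂ f n then π₂ else π₁) (f n)) = z)

/-- The action taken at time `n` in the switched execution. -/
def swAct {S A : Type} [DecidableEq S] [DecidableEq A] (z : S × A) (π₁ π₂ : S → A)
    (f : ℕ → S) (n : ℕ) : A :=
  (if swVisited z π₁ π₂ f n then π₂ else π₁) (f n)

/-- Probability of the trajectory with state sequence `f` under the switched execution
determined by `(z, π₁, π₂)`. -/
noncomputable def swProb {S A : Type} [DecidableEq S] [DecidableEq A] (μ : S → ℝ)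
    (P : S → A → S → ℝ) (z : S × A) (π₁ π₂ : S → A) (H : ℕ) (f : ℕ → S) : ℝ :=
  μ (f 0) * ∏ h ∈ Finset.range H, P (f h) (swAct z π₁ π₂ f h) (f (h + 1))

/-- Number of visits to `target` during the first `K` steps of the switched execution. -/
def swVisits {S A : Type} [DecidableEq S] [DecidableEq A] (z : S × A) (π₁ π₂ : S → A)
    (K : ℕ) (target : S × A) (f : ℕ → S) : ℕ :=
  ∑ h ∈ Finset.range K, if (f h, swAct z π₁ π₂ f h) = target then 1 else 0

/-- Joint probability of the independently drawn collection of switched-policy trajectories,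
one for each `((s', a'), π₁, π₂) ∈ (S × A) × Π_st × Π_st`. -/
noncomputable def jointProb {S A : Type} [Fintype S] [Fintype A] [DecidableEq S] [DecidableEq A]
    (μ : S → ℝ) (P : S → A → S → ℝ) (H : ℕ)
    (ω : (S × A) × (S → A) × (S → A) → (Fin (H + 1) → S)) : ℝ :=
  ∏ idx : (S × A) × (S → A) × (S → A),
    swProb μ P idx.1 idx.2.1 idx.2.2 H (extT H (ω idx))

/-- Total number of visits to `target` across the combined collection of switched-policy
trajectories. -/
def totalVisits {S A : Type} [Fintype S] [Fintype A] [DecidableEq S] [DecidableEq A]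
    (H : ℕ) (target : S × A) (ω : (S × A) × (S → A) × (S → A) → (Fin (H + 1) → S)) : ℕ :=
  ∑ idx : (S × A) × (S → A) × (S → A),
    swVisits idx.1 idx.2.1 idx.2.2 H target (extT H (ω idx))

/-- `Q^st_d(target)`: the `d`-quantile of the total number of visits to `target` across the
independently drawn collection of switched-policy trajectories. -/
noncomputable def Qst {S A : Type} [Fintype S] [Fintype A] [DecidableEq S] [DecidableEq A]
    (μ : S → ℝ) (P : S → A → S → ℝ) (H : ℕ) (target : S × A) (d : ℝ) : ℝ :=
  sSup {x : ℝ | d ≤ ∑ ω : (S × A) × (S → A) × (S → A) → (Fin (H + 1) → S),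
    if x ≤ (totalVisits H target ω : ℝ) then jointProb μ P H ω else 0}

/-!
Kill the chain at rate `δ = 1 / H`. Some stationary policy `π` maximises, from every state at
once, the probability of reaching `z` before being killed, and the expected number of visits to
`z` before being killed is a constant multiple of that probability. Both potentials are
therefore superharmonic for every action used by a non-stationary policy `π₀`, so they bound
from above the probability that `π₀` visits `z` at least `k` times, and `k` times this
probability.

To return to a finite horizon `T ≈ H / 2`, multiply the killing rate by `r = (|S| + 1) ^ 6`.
Doing this in one state decreases a Green potential by a factor of at most `r`, hence in all
states by at most `r ^ |S|`; and at rate `r δ` the contribution of the times after `T` is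
negligible as soon as `2 r ^ |S| (1 + δ) ^ T ≤ (1 + r δ) ^ T`, which is what the lower bound on
`H` guarantees. Finally, by the strong Markov property, the expected number `R` of visits of `π`
from `z` satisfies `R ≤ k + Pr[at least k visits] R`, so that `2 k ≤ R` visits occur with
probability at least `1 / 2` once `z` is reached; the first half of the horizon serves to reach
`z`, the second to revisit it.
-/

open scoped Matrix
open Matrix

section Substochastic

variable {S : Type*} [Fintype S]

/-- A nonnegative square matrix whose row sums are at most `1`: the transition matrix of a Markov
chain that may be killed. -/
structure IsSubstochastic (M : Matrix S S ℝ) : Prop where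
  nonneg : ∀ x y, 0 ≤ M x y
  sum_le_one : ∀ x, ∑ y, M x y ≤ 1

variable {M : Matrix S S ℝ} {l l' f U V : S → ℝ}

namespace IsSubstochastic

lemma mulVec_mono (hM : IsSubstochastic M) (h : U ≤ V) : M *ᵥ U ≤ M *ᵥ V :=
  fun x => dotProduct_le_dotProduct_of_nonneg_left h (hM.nonneg x)

lemma mulVec_nonneg (hM : IsSubstochastic M) (hV : 0 ≤ V) : 0 ≤ M *ᵥ V := by
  simpa using hM.mulVec_mono hV

lemma mulVec_le_of_le (hM : IsSubstochastic M) {a : ℝ} (ha : 0 ≤ a) (hV : ∀ y, V y ≤ a) (x : S) :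
    (M *ᵥ V) x ≤ a :=
  calc (M *ᵥ V) x ≤ ∑ y, M x y * a := hM.mulVec_mono hV x
    _ = (∑ y, M x y) * a := (sum_mul ..).symm
    _ ≤ a := mul_le_of_le_one_left ha (hM.sum_le_one x)

end IsSubstochastic

variable [DecidableEq S]

/-- The operator `V ↦ (1 + l) V - M V` of the chain `M` with killing rates `l`. -/
def killedGenerator (M : Matrix S S ℝ) (l : S → ℝ) : Matrix S S ℝ :=
  1 + diagonal l - M

/-- The Green potential `((1 + l) - M)⁻¹ f` of the charge `f` for the chain `M` with killing rates
`l`. -/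
noncomputable def greenPotential (M : Matrix S S ℝ) (l f : S → ℝ) : S → ℝ :=
  (killedGenerator M l)⁻¹ *ᵥ f

/-- The Green potential `∑ t < T, M ^ t f` of the charge `f` up to time `T`. -/
noncomputable def partialGreen (M : Matrix S S ℝ) (f : S → ℝ) (T : ℕ) : S → ℝ :=
  ∑ t ∈ range T, (M ^ t) *ᵥ f

lemma killedGenerator_mulVec_apply (x : S) :
    (killedGenerator M l *ᵥ V) x = (1 + l x) * V x - (M *ᵥ V) x := by
  simp [killedGenerator, sub_mulVec, add_mulVec, mulVec_diagonal, add_mul]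

lemma partialGreen_succ (T : ℕ) : partialGreen M f (T + 1) = f + M *ᵥ partialGreen M f T := by
  simp only [partialGreen, sum_range_succ', pow_succ', pow_zero, one_mulVec, mulVec_sum,
    mulVec_mulVec]
  exact add_comm _ _

namespace IsSubstochastic

lemma updateRow_zero (hM : IsSubstochastic M) (s : S) : IsSubstochastic (M.updateRow s 0) where
  nonneg x y := by
    rw [updateRow_apply]
    split_ifs
    exacts [le_rfl, hM.nonneg x y]
  sum_le_one x := by
    by_cases h : x = s
    · simp [h]
    · simpa [updateRow_ne h] using hM.sum_le_one x

lemma le_of_killedGenerator_le (hM : IsSubstochastic M) (hl : ∀ x, 0 < l x)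
    (h : ∀ x, U x ≤ V x ∨ (killedGenerator M l *ᵥ U) x ≤ (killedGenerator M l *ᵥ V) x) :
    U ≤ V := by
  intro x
  obtain ⟨x₀, -, hmax⟩ := exists_max_image univ (U - V) ⟨x, mem_univ x⟩
  suffices (U - V) x₀ ≤ 0 from sub_nonpos.mp ((hmax x (mem_univ x)).trans this)
  rcases h x₀ with h₀ | h₀
  · exact sub_nonpos.mpr h₀
  · by_contra! hpos
    have hM₀ := hM.mulVec_le_of_le hpos.le (fun y => hmax y (mem_univ y)) x₀
    simp only [killedGenerator_mulVec_apply] at h₀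
    simp only [mulVec_sub, Pi.sub_apply] at hM₀ hpos
    nlinarith [hl x₀]

lemma eq_of_killedGenerator_eq (hM : IsSubstochastic M) (hl : ∀ x, 0 < l x)
    (h : ∀ x, U x = V x ∨ (killedGenerator M l *ᵥ U) x = (killedGenerator M l *ᵥ V) x) : U = V :=
  le_antisymm (hM.le_of_killedGenerator_le hl fun x => (h x).imp Eq.le Eq.le)
    (hM.le_of_killedGenerator_le hl fun x => (h x).imp Eq.ge Eq.ge)

lemma killedGenerator_det_ne_zero (hM : IsSubstochastic M) (hl : ∀ x, 0 < l x) :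
    (killedGenerator M l).det ≠ 0 := by
  refine det_ne_zero_of_sum_row_lt_diag fun x => ?_
  have hrow := hM.sum_le_one x
  rw [← add_sum_erase _ _ (mem_univ x)] at hrow
  have hoff : ∀ y ∈ univ.erase x, ‖killedGenerator M l x y‖ = M x y := fun y hy => by
    simp [killedGenerator, one_apply_ne (ne_of_mem_erase hy).symm,
      diagonal_apply_ne _ (ne_of_mem_erase hy).symm, abs_of_nonneg (hM.nonneg x y)]
  calc ∑ y ∈ univ.erase x, ‖killedGenerator M l x y‖ = ∑ y ∈ univ.erase x, M x y :=
        sum_congr rfl hoff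
    _ < 1 + l x - M x x := by linarith [hl x]
    _ ≤ ‖killedGenerator M l x x‖ := by
        simpa [killedGenerator] using le_abs_self (1 + l x - M x x)

lemma killedGenerator_mulVec_greenPotential (hM : IsSubstochastic M) (hl : ∀ x, 0 < l x)
    (f : S → ℝ) : killedGenerator M l *ᵥ greenPotential M l f = f := by
  rw [greenPotential, mulVec_mulVec,
    mul_nonsing_inv _ (isUnit_iff_ne_zero.mpr (hM.killedGenerator_det_ne_zero hl)), one_mulVec]

lemma greenPotential_eq (hM : IsSubstochastic M) (hl : ∀ x, 0 < l x) (f : S → ℝ) (x : S) :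
    (1 + l x) * greenPotential M l f x = (M *ᵥ greenPotential M l f) x + f x := by
  have h := congrFun (hM.killedGenerator_mulVec_greenPotential hl f) x
  rw [killedGenerator_mulVec_apply] at h
  linarith

lemma greenPotential_nonneg (hM : IsSubstochastic M) (hl : ∀ x, 0 < l x) (hf : 0 ≤ f) :
    0 ≤ greenPotential M l f :=
  hM.le_of_killedGenerator_le hl fun x => Or.inr <| by
    simpa [hM.killedGenerator_mulVec_greenPotential hl] using hf x

lemma greenPotential_anti (hM : IsSubstochastic M) (hl : ∀ x, 0 < l x) (hll' : l ≤ l')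
    (hf : 0 ≤ f) : greenPotential M l' f ≤ greenPotential M l f := by
  have hl' : ∀ x, 0 < l' x := fun x => (hl x).trans_le (hll' x)
  refine hM.le_of_killedGenerator_le hl fun x => Or.inr ?_
  rw [hM.killedGenerator_mulVec_greenPotential hl, killedGenerator_mulVec_apply]
  have hG := hM.greenPotential_nonneg hl' hf x
  simp only [Pi.zero_apply] at hG
  nlinarith [hM.greenPotential_eq hl' f x, hll' x]

lemma greenPotential_sub_update_le (hM : IsSubstochastic M) (hl : ∀ x, 0 < l x) {u : S} {c : ℝ}
    (hc : l u ≤ c) (hf : 0 ≤ f) :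
    greenPotential M l f - greenPotential M (Function.update l u c) f
      ≤ fun _ => (greenPotential M l f - greenPotential M (Function.update l u c) f) u := by
  set l' := Function.update l u c
  have hll' : l ≤ l' := le_update_iff.mpr ⟨hc, fun _ _ => le_rfl⟩
  have hG := hM.greenPotential_eq hl f
  have hG' := hM.greenPotential_eq (fun x => (hl x).trans_le (hll' x)) f
  have hpos := sub_nonneg.mpr (hM.greenPotential_anti hl hll' hf u)
  set G := greenPotential M l f
  set G' := greenPotential M l' f
  refine hM.le_of_killedGenerator_le hl fun x => ?_
  rcases eq_or_ne x u with rfl | hx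
  · exact Or.inl le_rfl
  · right
    have hconst : (M *ᵥ fun _ => (G - G') u) x ≤ (G - G') u :=
      hM.mulVec_le_of_le hpos (fun _ => le_rfl) x
    have hGx' := hG' x
    rw [show l' x = l x from Function.update_of_ne hx ..] at hGx'
    have hlD : 0 ≤ l x * (G - G') u := mul_nonneg (hl x).le hpos
    simp only [killedGenerator_mulVec_apply, mulVec_sub, Pi.sub_apply] at hconst hlD ⊢
    linarith [hG x]

lemma greenPotential_le_smul_update (hM : IsSubstochastic M) (hl : ∀ x, 0 < l x) {r : ℝ}
    (hr : 1 ≤ r) (u : S) (hf : 0 ≤ f) :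
    greenPotential M l f ≤ r • greenPotential M (Function.update l u (r * l u)) f := by
  have hlu : l u ≤ r * l u := le_mul_of_one_le_left (hl u).le hr
  have hmax := hM.greenPotential_sub_update_le hl hlu hf
  set l' := Function.update l u (r * l u)
  have hll' : l ≤ l' := le_update_iff.mpr ⟨hlu, fun _ _ => le_rfl⟩
  have hG := hM.greenPotential_eq hl f
  have hG' := hM.greenPotential_eq (fun x => (hl x).trans_le (hll' x)) f
  have hanti := hM.greenPotential_anti hl hll' hf
  set G := greenPotential M l f
  set G' := greenPotential M l' f
  have hu : G u ≤ r * G' u := by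
    have hMD := hM.mulVec_le_of_le (sub_nonneg.mpr (hanti u)) hmax u
    have hGu' := hG' u
    rw [show l' u = r * l u from Function.update_self ..] at hGu'
    simp only [mulVec_sub, Pi.sub_apply] at hMD
    refine le_of_mul_le_mul_left (?_ : l u * G u ≤ l u * (r * G' u)) (hl u)
    linarith [hG u]
  refine hM.le_of_killedGenerator_le hl fun x => ?_
  rcases eq_or_ne x u with rfl | hx
  · exact Or.inl hu
  · right
    have hGx' := hG' x
    rw [show l' x = l x from Function.update_of_ne hx ..] at hGx'
    simp only [killedGenerator_mulVec_apply, mulVec_smul, Pi.smul_apply, smul_eq_mul]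
    have hfx := hf x
    simp only [Pi.zero_apply] at hfx
    nlinarith [hG x]

lemma greenPotential_le_pow_card_smul (hM : IsSubstochastic M) (hl : ∀ x, 0 < l x) {r : ℝ}
    (hr : 1 ≤ r) (hf : 0 ≤ f) :
    greenPotential M l f ≤ r ^ Fintype.card S • greenPotential M (r • l) f := by
  have hpiecewise : ∀ F : Finset S,
      greenPotential M l f ≤ r ^ #F • greenPotential M (F.piecewise (r • l) l) f := by
    intro F
    induction F using Finset.induction_on with
    | empty => simp
    | insert u F hu ih =>
      have hrate : ∀ x, 0 < F.piecewise (r • l) l x := fun x => by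
        have := hl x
        by_cases hx : x ∈ F <;> simp only [hx, piecewise_eq_of_mem, piecewise_eq_of_notMem,
          not_false_eq_true, Pi.smul_apply, smul_eq_mul] <;> positivity
      have hstep := hM.greenPotential_le_smul_update hrate hr u hf
      rw [piecewise_eq_of_notMem _ _ _ hu] at hstep
      rw [card_insert_of_notMem hu, pow_succ, mul_smul, piecewise_insert]
      exact ih.trans (smul_le_smul_of_nonneg_left hstep (by positivity))
  simpa using hpiecewise univ

lemma partialGreen_nonneg (hM : IsSubstochastic M) (hf : 0 ≤ f) (T : ℕ) :
    0 ≤ partialGreen M f T := by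
  induction T with
  | zero => simp [partialGreen]
  | succ T ih => simpa [partialGreen_succ] using add_nonneg hf (hM.mulVec_nonneg ih)

lemma partialGreen_mono (hM : IsSubstochastic M) (hf : 0 ≤ f) : Monotone (partialGreen M f) := by
  refine monotone_nat_of_le_succ fun T => ?_
  induction T with
  | zero => simpa [partialGreen] using hf
  | succ T ih =>
    rw [partialGreen_succ, partialGreen_succ (T + 1)]
    gcongr
    exact hM.mulVec_mono ih

/- As `greenPotential M c = ∑ t, M ^ t f / (1 + c) ^ (t + 1)`, replacing `b` by `a ≤ b` gains a
factor of at least `((1 + b) / (1 + a)) ^ T` on the terms with `T ≤ t`. -/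
lemma greenPotential_sub_le_partialGreen (hM : IsSubstochastic M) {a b : ℝ} (ha : 0 < a)
    (hab : a ≤ b) (hf : 0 ≤ f) (T : ℕ) :
    greenPotential M (fun _ => b) f - ((1 + a) / (1 + b)) ^ T • greenPotential M (fun _ => a) f
      ≤ partialGreen M f T := by
  have hb : 0 < b := ha.trans_le hab
  have hVa := hM.greenPotential_eq (fun _ => ha) f
  have hVb := hM.greenPotential_eq (fun _ => hb) f
  have hanti := hM.greenPotential_anti (fun _ => ha) (l' := fun _ => b) (fun _ => hab) hf
  set Va := greenPotential M (fun _ => a) f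
  set Vb := greenPotential M (fun _ => b) f
  set q := (1 + a) / (1 + b)
  induction T with
  | zero => simpa [partialGreen] using hanti
  | succ T ih =>
    intro x
    have hq : 0 ≤ q ^ T * f x := mul_nonneg (by positivity) (hf x)
    have hpos := hM.partialGreen_nonneg hf (T + 1) x
    have hih := hM.mulVec_mono ih x
    have hscaled : (1 + b) * (Vb - q ^ (T + 1) • Va) x ≤ partialGreen M f (T + 1) x := by
      have hqb : (1 + b) * q ^ (T + 1) = q ^ T * (1 + a) := by
        rw [pow_succ, mul_left_comm, mul_div_cancel₀ _ (by positivity)]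
      calc (1 + b) * (Vb - q ^ (T + 1) • Va) x
          = (1 + b) * Vb x - q ^ T * ((1 + a) * Va x) := by
            simp only [Pi.sub_apply, Pi.smul_apply, smul_eq_mul]
            linear_combination (-Va x) * hqb
        _ = (M *ᵥ (Vb - q ^ T • Va)) x + f x - q ^ T * f x := by
            rw [hVa, hVb, mulVec_sub, mulVec_smul, Pi.sub_apply, Pi.smul_apply, smul_eq_mul]
            ring
        _ ≤ partialGreen M f (T + 1) x := by
            rw [partialGreen_succ, Pi.add_apply]
            linarith
    by_contra! hlt
    simp only [Pi.zero_apply] at hpos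
    nlinarith

lemma greenPotential_le_partialGreen (hM : IsSubstochastic M) {δ r : ℝ} (hδ : 0 < δ) (hr : 1 ≤ r)
    (hf : 0 ≤ f) {T : ℕ}
    (hT : 2 * r ^ Fintype.card S * (1 + δ) ^ T ≤ (1 + r * δ) ^ T) (x : S) :
    greenPotential M (fun _ => δ) f x ≤ 2 * r ^ Fintype.card S * partialGreen M f T x := by
  have hrate := hM.greenPotential_le_pow_card_smul (l := fun _ => δ) (fun _ => hδ) hr hf x
  have htail := hM.greenPotential_sub_le_partialGreen hδ (le_mul_of_one_le_left hδ.le hr) hf T x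
  have hrs : r • (fun _ : S => δ) = fun _ => r * δ := rfl
  simp only [hrs, Pi.sub_apply, Pi.smul_apply, smul_eq_mul] at hrate htail
  have hq : 2 * r ^ Fintype.card S * ((1 + δ) / (1 + r * δ)) ^ T ≤ 1 := by
    rw [div_pow, ← mul_div_assoc, div_le_one (by positivity)]
    exact hT
  have hG := mul_le_mul_of_nonneg_right hq (hM.greenPotential_nonneg (fun _ => hδ) hf x)
  have hscaled := mul_le_mul_of_nonneg_left htail (by positivity : 0 ≤ 2 * r ^ Fintype.card S)
  linarith

end IsSubstochastic

end Substochastic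

section Policy

variable {S A : Type*}

/-- The transition matrix of the Markov chain induced by the stationary policy `π`. -/
def policyKernel (P : S → A → S → ℝ) (π : S → A) : Matrix S S ℝ :=
  of fun x => P x (π x)

variable [Fintype S]

lemma dotProduct_le_of_mem_stdSimplex {p V : S → ℝ} (hp : p ∈ stdSimplex ℝ S) {a : ℝ}
    (hV : ∀ y, V y ≤ a) : p ⬝ᵥ V ≤ a :=
  calc p ⬝ᵥ V ≤ ∑ y, p y * a := dotProduct_le_dotProduct_of_nonneg_left hV hp.1
    _ = a := by rw [← sum_mul, hp.2, one_mul]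

lemma policyKernel_mulVec_apply (P : S → A → S → ℝ) (π : S → A) (V : S → ℝ) (x : S) :
    (policyKernel P π *ᵥ V) x = P x (π x) ⬝ᵥ V :=
  rfl

lemma isSubstochastic_policyKernel {P : S → A → S → ℝ} (hP : ∀ s a, P s a ∈ stdSimplex ℝ S)
    (π : S → A) : IsSubstochastic (policyKernel P π) where
  nonneg x := (hP x (π x)).1
  sum_le_one x := (hP x (π x)).2.le

variable [DecidableEq S]

lemma policyKernel_updateRow_zero_mulVec_apply (P : S → A → S → ℝ) (π : S → A) (s : S)
    (V : S → ℝ) (x : S) :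
    ((policyKernel P π).updateRow s 0 *ᵥ V) x = if x = s then 0 else P x (π x) ⬝ᵥ V := by
  split_ifs with h
  · simp [mulVec, h]
  · simp [mulVec, updateRow_ne h, policyKernel]

/-- The Green potential at killing rate `δ` of the chain of `π` stopped at its first visit to `s`;
its value at `x` is `1 / (1 + δ)` times the probability that the chain started at `x` reaches `s`
before it is killed. -/
noncomputable def reachPotential (P : S → A → S → ℝ) (π : S → A) (s : S) (δ : ℝ) : S → ℝ :=
  greenPotential ((policyKernel P π).updateRow s 0) (fun _ => δ) (Pi.single s 1)

/-- The Green potential at killing rate `δ` of the chain of `π`; its value at `x` is `1 / (1 + δ)`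
times the expected number of visits to `s` of the chain started at `x` before it is killed. -/
noncomputable def visitPotential (P : S → A → S → ℝ) (π : S → A) (s : S) (δ : ℝ) : S → ℝ :=
  greenPotential (policyKernel P π) (fun _ => δ) (Pi.single s 1)

variable {P : S → A → S → ℝ} (hP : ∀ s a, P s a ∈ stdSimplex ℝ S) {δ : ℝ} (hδ : 0 < δ)
include hP hδ

lemma reachPotential_nonneg (π : S → A) (s : S) : 0 ≤ reachPotential P π s δ :=
  ((isSubstochastic_policyKernel hP π).updateRow_zero s).greenPotential_nonneg (fun _ => hδ)
    (Pi.single_nonneg.mpr zero_le_one)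

lemma reachPotential_self (π : S → A) (s : S) : (1 + δ) * reachPotential P π s δ s = 1 := by
  have h := ((isSubstochastic_policyKernel hP π).updateRow_zero s).greenPotential_eq (fun _ => hδ)
    (Pi.single s 1) s
  rwa [policyKernel_updateRow_zero_mulVec_apply, if_pos rfl, Pi.single_eq_same, zero_add] at h

lemma reachPotential_of_ne (π : S → A) {s x : S} (hx : x ≠ s) :
    (1 + δ) * reachPotential P π s δ x = P x (π x) ⬝ᵥ reachPotential P π s δ := by
  have h := ((isSubstochastic_policyKernel hP π).updateRow_zero s).greenPotential_eq (fun _ => hδ)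
    (Pi.single s 1) x
  rwa [policyKernel_updateRow_zero_mulVec_apply, if_neg hx, Pi.single_eq_of_ne hx, add_zero] at h

lemma sum_reachPotential_lt_update (π : S → A) {s u : S} (hu : u ≠ s) {b : A}
    (hb : (1 + δ) * reachPotential P π s δ u < P u b ⬝ᵥ reachPotential P π s δ) :
    ∑ x, reachPotential P π s δ x < ∑ x, reachPotential P (Function.update π u b) s δ x := by
  set π' := Function.update π u b
  have hπ'u : π' u = b := Function.update_self ..
  have hle : reachPotential P π s δ ≤ reachPotential P π' s δ := by
    have hM := (isSubstochastic_policyKernel hP π').updateRow_zero s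
    refine hM.le_of_killedGenerator_le (fun _ => hδ) fun x => ?_
    rcases eq_or_ne x s with rfl | hx
    · refine Or.inl (le_of_mul_le_mul_left (Eq.le ?_) (by positivity : 0 < 1 + δ))
      rw [reachPotential_self hP hδ, reachPotential_self hP hδ]
    right
    simp only [killedGenerator_mulVec_apply, policyKernel_updateRow_zero_mulVec_apply, if_neg hx]
    rw [reachPotential_of_ne hP hδ π' hx, sub_self, sub_nonpos]
    rcases eq_or_ne x u with rfl | hxu
    · exact hπ'u ▸ hb.le
    · rw [reachPotential_of_ne hP hδ π hx, show π' x = π x from Function.update_of_ne hxu ..]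
  have hlt : (1 + δ) * reachPotential P π s δ u < (1 + δ) * reachPotential P π' s δ u := by
    rw [reachPotential_of_ne hP hδ π' hu, hπ'u]
    exact hb.trans_le (dotProduct_le_dotProduct_of_nonneg_left hle (hP u b).1)
  exact sum_lt_sum (fun x _ => hle x)
    ⟨u, mem_univ u, lt_of_mul_lt_mul_left hlt (by positivity)⟩

lemma exists_policy_reachPotential_superharmonic (z : S × A) (B : Finset A) :
    ∃ π : S → A, π z.1 = z.2 ∧ ∀ x ≠ z.1, ∀ b ∈ B,
      P x b ⬝ᵥ reachPotential P π z.1 δ ≤ (1 + δ) * reachPotential P π z.1 δ x := by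
  classical
  let F : Finset (S → A) := Fintype.piFinset fun x => if x = z.1 then {z.2} else insert z.2 B
  have hF : F.Nonempty := ⟨fun _ => z.2, Fintype.mem_piFinset.mpr fun x => by split_ifs <;> simp⟩
  obtain ⟨π, hπF, hmax⟩ := F.exists_max_image (fun π => ∑ x, reachPotential P π z.1 δ x) hF
  have hπ := Fintype.mem_piFinset.mp hπF
  refine ⟨π, by simpa using hπ z.1, fun u hu b hb => ?_⟩
  by_contra! hlt
  refine (sum_reachPotential_lt_update hP hδ π hu hlt).not_ge
    (hmax _ (Fintype.mem_piFinset.mpr fun x => ?_))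
  rcases eq_or_ne x u with rfl | hxu
  · simp [hu, hb]
  · simpa [hxu] using hπ x

lemma visitPotential_nonneg (π : S → A) (s : S) : 0 ≤ visitPotential P π s δ :=
  (isSubstochastic_policyKernel hP π).greenPotential_nonneg (fun _ => hδ)
    (Pi.single_nonneg.mpr zero_le_one)

lemma visitPotential_self (π : S → A) (s : S) :
    (1 + δ) * visitPotential P π s δ s = P s (π s) ⬝ᵥ visitPotential P π s δ + 1 := by
  have h := (isSubstochastic_policyKernel hP π).greenPotential_eq (fun _ => hδ) (Pi.single s 1) s
  rwa [policyKernel_mulVec_apply, Pi.single_eq_same] at h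

lemma visitPotential_of_ne (π : S → A) {s x : S} (hx : x ≠ s) :
    (1 + δ) * visitPotential P π s δ x = P x (π x) ⬝ᵥ visitPotential P π s δ := by
  have h := (isSubstochastic_policyKernel hP π).greenPotential_eq (fun _ => hδ) (Pi.single s 1) x
  rwa [policyKernel_mulVec_apply, Pi.single_eq_of_ne hx, add_zero] at h

lemma visitPotential_le_self (π : S → A) (s x : S) :
    visitPotential P π s δ x ≤ visitPotential P π s δ s := by
  have hs := visitPotential_nonneg hP hδ π s s
  have hM := isSubstochastic_policyKernel hP π
  refine hM.le_of_killedGenerator_le (V := fun _ => visitPotential P π s δ s) (fun _ => hδ)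
    (fun x => ?_) x
  rcases eq_or_ne x s with rfl | hx
  · exact Or.inl le_rfl
  · right
    have hconst := hM.mulVec_le_of_le hs (fun _ => le_rfl) x
    have hδs : 0 ≤ δ * visitPotential P π s δ s := mul_nonneg hδ.le hs
    rw [killedGenerator_mulVec_apply, killedGenerator_mulVec_apply, policyKernel_mulVec_apply _ _
      (visitPotential P π s δ), visitPotential_of_ne hP hδ π hx]
    linarith

lemma visitPotential_eq_smul_reachPotential (π : S → A) (s : S) :
    visitPotential P π s δ
      = ((1 + δ) * visitPotential P π s δ s) • reachPotential P π s δ := by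
  refine (isSubstochastic_policyKernel hP π).eq_of_killedGenerator_eq (fun _ => hδ) fun x => ?_
  rcases eq_or_ne x s with rfl | hx
  · left
    rw [Pi.smul_apply, smul_eq_mul, mul_right_comm, reachPotential_self hP hδ, one_mul]
  · right
    simp only [killedGenerator_mulVec_apply, policyKernel_mulVec_apply, dotProduct_smul,
      Pi.smul_apply, smul_eq_mul]
    rw [visitPotential_of_ne hP hδ π hx, ← reachPotential_of_ne hP hδ π hx]
    ring

lemma visitPotential_superharmonic [DecidableEq A] {π : S → A} {z : S × A} {B : Finset A}
    (hπ : π z.1 = z.2) (hB : ∀ x ≠ z.1, ∀ b ∈ B,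
      P x b ⬝ᵥ reachPotential P π z.1 δ ≤ (1 + δ) * reachPotential P π z.1 δ x)
    (x : S) {b : A} (hb : b ∈ B) :
    (if (x, b) = z then 1 else 0) + P x b ⬝ᵥ visitPotential P π z.1 δ
      ≤ (1 + δ) * visitPotential P π z.1 δ x := by
  have hz0 := visitPotential_nonneg hP hδ π z.1 z.1
  simp only [Pi.zero_apply] at hz0
  obtain ⟨s, a⟩ := z
  rcases eq_or_ne x s with rfl | hx
  · rcases eq_or_ne b a with rfl | hba
    · rw [if_pos rfl, visitPotential_self hP hδ, hπ, add_comm]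
    · rw [if_neg fun h => hba (congrArg Prod.snd h), zero_add]
      have := dotProduct_le_of_mem_stdSimplex (hP x b) (visitPotential_le_self hP hδ π x)
      nlinarith
  · rw [if_neg fun h => hx (congrArg Prod.fst h), zero_add,
      visitPotential_eq_smul_reachPotential hP hδ π s, dotProduct_smul, Pi.smul_apply,
      smul_eq_mul, smul_eq_mul, mul_left_comm (1 + δ) (_ * _)]
    exact mul_le_mul_of_nonneg_left (hB x hx b hb) (by positivity)

end Policy

section VisitProb

variable {S A : Type*} [Fintype S] [DecidableEq S] [DecidableEq A]

/-- The probability that the policy `π`, started at `x`, visits `z` at least `k` times within the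
first `H` steps, by recursion on the first step. -/
noncomputable def visitProb (P : S → A → S → ℝ) (z : S × A) : ℕ → ℕ → (ℕ → S → A) → S → ℝ
  | 0, k, _, _ => if k = 0 then 1 else 0
  | H + 1, k, π, x =>
    P x (π 0 x) ⬝ᵥ visitProb P z H (k - if (x, π 0 x) = z then 1 else 0) fun h => π (h + 1)

variable {P : S → A → S → ℝ} (hP : ∀ s a, P s a ∈ stdSimplex ℝ S) (z : S × A)
include hP

lemma visitProb_nonneg (H k : ℕ) (π : ℕ → S → A) : 0 ≤ visitProb P z H k π := by
  induction H generalizing k π with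
  | zero => exact fun x => by simp only [visitProb]; split_ifs <;> simp
  | succ H ih => exact fun x => dotProduct_nonneg_of_nonneg (hP _ _).1 (ih _ _)

lemma visitProb_le_one (H k : ℕ) (π : ℕ → S → A) (x : S) : visitProb P z H k π x ≤ 1 := by
  induction H generalizing k π x with
  | zero => simp only [visitProb]; split_ifs <;> simp
  | succ H ih => exact dotProduct_le_of_mem_stdSimplex (hP _ _) (ih _ _)

lemma visitProb_zero_right (H : ℕ) (π : ℕ → S → A) (x : S) : visitProb P z H 0 π x = 1 := by
  induction H generalizing π x with
  | zero => simp [visitProb]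
  | succ H ih => simp only [visitProb, zero_tsub, dotProduct, ih, mul_one, (hP _ _).2]

lemma visitProb_mono (k : ℕ) (π : ℕ → S → A) : Monotone fun H => visitProb P z H k π := by
  refine monotone_nat_of_le_succ fun H => ?_
  induction H generalizing k π with
  | zero =>
    rcases k.eq_zero_or_pos with rfl | hk
    · exact fun x => ((visitProb_zero_right hP z 0 π x).trans
        (visitProb_zero_right hP z 1 π x).symm).le
    · exact fun x => by simpa [visitProb, hk.ne'] using visitProb_nonneg hP z 1 k π x
  | succ H ih => exact fun x => dotProduct_le_dotProduct_of_nonneg_left (ih _ _) (hP _ _).1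

section UpperBounds

variable {z} {c : ℝ} (hc : 1 ≤ c) {B : Finset A}
include hc

lemma visitProb_le_of_superharmonic {W : S → ℝ} (hW : 0 ≤ W) (hWz : 1 ≤ c * W z.1)
    (hWB : ∀ x ≠ z.1, ∀ b ∈ B, P x b ⬝ᵥ W ≤ c * W x) {H k : ℕ} (hk : k ≠ 0)
    {π : ℕ → S → A} (hπ : ∀ h < H, ∀ x, π h x ∈ B) (x : S) :
    visitProb P z H k π x ≤ c ^ H * W x := by
  induction H generalizing π x with
  | zero => simpa [visitProb, hk] using hW x
  | succ H ih =>
    rcases eq_or_ne x z.1 with rfl | hx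
    · calc visitProb P z (H + 1) k π z.1 ≤ 1 := visitProb_le_one hP z _ _ _ _
        _ ≤ c ^ H * (c * W z.1) := one_le_mul_of_one_le_of_one_le (one_le_pow₀ hc) hWz
        _ = c ^ (H + 1) * W z.1 := by rw [pow_succ, mul_assoc]
    · have hxz : (x, π 0 x) ≠ z := fun h => hx (congrArg Prod.fst h)
      have hshift : ∀ h < H, ∀ x, π (h + 1) x ∈ B := fun h hh => hπ (h + 1) (by omega)
      calc visitProb P z (H + 1) k π x
          = P x (π 0 x) ⬝ᵥ visitProb P z H k fun h => π (h + 1) := by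
            rw [visitProb, if_neg hxz, tsub_zero]
        _ ≤ P x (π 0 x) ⬝ᵥ (c ^ H • W) :=
            dotProduct_le_dotProduct_of_nonneg_left (ih hshift) (hP _ _).1
        _ = c ^ H * (P x (π 0 x) ⬝ᵥ W) := dotProduct_smul ..
        _ ≤ c ^ H * (c * W x) := by gcongr; exact hWB x hx _ (hπ 0 (by omega) x)
        _ = c ^ (H + 1) * W x := by rw [pow_succ, mul_assoc]

lemma mul_visitProb_le_of_superharmonic {G : S → ℝ} (hG : 0 ≤ G)
    (hGB : ∀ x, ∀ b ∈ B, (if (x, b) = z then 1 else 0) + P x b ⬝ᵥ G ≤ c * G x) (H k : ℕ)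
    {π : ℕ → S → A} (hπ : ∀ h < H, ∀ x, π h x ∈ B) (x : S) :
    k * visitProb P z H k π x ≤ c ^ H * G x := by
  induction H generalizing k π x with
  | zero => rcases eq_or_ne k 0 with rfl | hk <;> simpa [visitProb, *] using hG x
  | succ H ih =>
    set i : ℕ := if (x, π 0 x) = z then 1 else 0 with hi
    set V := visitProb P z H (k - i) fun h => π (h + 1)
    have hshift : ∀ h < H, ∀ x, π (h + 1) x ∈ B := fun h hh => hπ (h + 1) (by omega)
    have hk : (k : ℝ) ≤ i + (k - i : ℕ) := by exact_mod_cast le_add_tsub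
    have hV0 : 0 ≤ P x (π 0 x) ⬝ᵥ V :=
      dotProduct_nonneg_of_nonneg (hP _ _).1 (visitProb_nonneg hP z _ _ _)
    have hV1 : P x (π 0 x) ⬝ᵥ V ≤ 1 :=
      dotProduct_le_of_mem_stdSimplex (hP _ _) (visitProb_le_one hP z _ _ _)
    have hV : (k - i : ℕ) * (P x (π 0 x) ⬝ᵥ V) ≤ c ^ H * (P x (π 0 x) ⬝ᵥ G) := by
      have := dotProduct_le_dotProduct_of_nonneg_left (u := ((k - i : ℕ) : ℝ) • V)
        (v := c ^ H • G) (ih (k - i) hshift) (hP x (π 0 x)).1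
      simpa only [dotProduct_smul, smul_eq_mul] using this
    calc k * visitProb P z (H + 1) k π x ≤ (i + (k - i : ℕ)) * (P x (π 0 x) ⬝ᵥ V) :=
          mul_le_mul_of_nonneg_right hk hV0
      _ ≤ i * 1 + c ^ H * (P x (π 0 x) ⬝ᵥ G) := by
          rw [add_mul]
          gcongr
      _ ≤ i * c ^ H + c ^ H * (P x (π 0 x) ⬝ᵥ G) := by gcongr; exact one_le_pow₀ hc
      _ = c ^ H * ((if (x, π 0 x) = z then 1 else 0) + P x (π 0 x) ⬝ᵥ G) := by
          rw [hi]
          push_cast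
          ring
      _ ≤ c ^ H * (c * G x) := by gcongr; exact hGB x _ (hπ 0 (by omega) x)
      _ = c ^ (H + 1) * G x := by rw [pow_succ, mul_assoc]

end UpperBounds

end VisitProb

section Stationary

variable {S A : Type*} [Fintype S] [DecidableEq S]

/-- The probability that the chain of `π`, started at `x`, visits `s` within its first `T` steps. -/
noncomputable def reachProb (P : S → A → S → ℝ) (π : S → A) (s : S) (T : ℕ) : S → ℝ :=
  partialGreen ((policyKernel P π).updateRow s 0) (Pi.single s 1) T

/-- The expected number of visits to `s` of the chain of `π`, started at `x`, within its first `T`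
steps. -/
noncomputable def expVisits (P : S → A → S → ℝ) (π : S → A) (s : S) (T : ℕ) : S → ℝ :=
  partialGreen (policyKernel P π) (Pi.single s 1) T

lemma reachProb_succ (P : S → A → S → ℝ) (π : S → A) (s : S) (T : ℕ) (x : S) :
    reachProb P π s (T + 1) x = if x = s then 1 else P x (π x) ⬝ᵥ reachProb P π s T := by
  rw [reachProb, partialGreen_succ, Pi.add_apply, policyKernel_updateRow_zero_mulVec_apply,
    Pi.single_apply]
  split_ifs <;> simp [reachProb]

lemma expVisits_succ (P : S → A → S → ℝ) (π : S → A) (s : S) (T : ℕ) (x : S) :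
    expVisits P π s (T + 1) x
      = (if x = s then 1 else 0) + P x (π x) ⬝ᵥ expVisits P π s T := by
  rw [expVisits, partialGreen_succ, Pi.add_apply, policyKernel_mulVec_apply, Pi.single_apply]
  rfl

variable {P : S → A → S → ℝ} (hP : ∀ s a, P s a ∈ stdSimplex ℝ S)
include hP

lemma reachProb_nonneg (π : S → A) (s : S) (T : ℕ) : 0 ≤ reachProb P π s T :=
  ((isSubstochastic_policyKernel hP π).updateRow_zero s).partialGreen_nonneg
    (Pi.single_nonneg.mpr zero_le_one) T

lemma expVisits_nonneg (π : S → A) (s : S) (T : ℕ) : 0 ≤ expVisits P π s T :=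
  (isSubstochastic_policyKernel hP π).partialGreen_nonneg (Pi.single_nonneg.mpr zero_le_one) T

lemma expVisits_mono (π : S → A) (s : S) : Monotone (expVisits P π s) :=
  (isSubstochastic_policyKernel hP π).partialGreen_mono (Pi.single_nonneg.mpr zero_le_one)

lemma expVisits_le_self (π : S → A) (s : S) {t T : ℕ} (ht : t ≤ T) (x : S) :
    expVisits P π s t x ≤ expVisits P π s T s := by
  induction t generalizing x with
  | zero => simpa [expVisits, partialGreen] using expVisits_nonneg hP π s T s
  | succ t ih =>
    rcases eq_or_ne x s with rfl | hx
    · exact expVisits_mono hP π x ht x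
    · rw [expVisits_succ, if_neg hx, zero_add]
      exact dotProduct_le_of_mem_stdSimplex (hP _ _) (ih (by omega))

variable [DecidableEq A] {z : S × A} {π : S → A} (hπ : π z.1 = z.2)
include hπ

omit hP in
lemma visitProb_succ_stationary (H k : ℕ) (x : S) :
    visitProb P z (H + 1) k (fun _ => π) x
      = P x (π x) ⬝ᵥ visitProb P z H (k - if x = z.1 then 1 else 0) fun _ => π := by
  have hxz : (x, π x) = z ↔ x = z.1 := ⟨congrArg Prod.fst, fun h => Prod.ext h (h ▸ hπ)⟩
  simp only [visitProb, hxz]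

-- The strong Markov property at the `k`-th visit to `z.1`.
lemma expVisits_le_add_visitProb_mul {t T : ℕ} (ht : t ≤ T) (k : ℕ) (x : S) :
    expVisits P π z.1 t x
      ≤ k + visitProb P z t k (fun _ => π) x * expVisits P π z.1 T z.1 := by
  induction t generalizing k x with
  | zero =>
    have hV := visitProb_nonneg hP z 0 k (fun _ => π) x
    have hE := expVisits_nonneg hP π z.1 T z.1
    simpa [expVisits, partialGreen] using add_nonneg k.cast_nonneg (mul_nonneg hV hE)
  | succ t ih =>
    rcases k.eq_zero_or_pos with rfl | hk
    · simpa [visitProb_zero_right hP] using expVisits_le_self hP π z.1 ht x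
    set i : ℕ := if x = z.1 then 1 else 0 with hi
    have hik : (i : ℝ) + (k - i : ℕ) = k := by
      exact_mod_cast add_tsub_cancel_of_le (by rw [hi]; split_ifs <;> omega)
    set p := P x (π x)
    set V := visitProb P z t (k - i) fun _ => π
    set R := expVisits P π z.1 T z.1
    calc expVisits P π z.1 (t + 1) x = i + p ⬝ᵥ expVisits P π z.1 t := by
          rw [expVisits_succ, hi]
          push_cast
          rfl
      _ ≤ i + p ⬝ᵥ ((fun _ => ((k - i : ℕ) : ℝ)) + R • V) := by
          gcongr
          exact dotProduct_le_dotProduct_of_nonneg_left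
            (fun y => (ih (by omega) (k - i) y).trans_eq (by simp [R, V, mul_comm])) (hP _ _).1
      _ = i + ((k - i : ℕ) + (p ⬝ᵥ V) * R) := by
          rw [dotProduct_add, dotProduct_smul, smul_eq_mul, mul_comm R]
          simp only [dotProduct, ← sum_mul, p, (hP x (π x)).2, one_mul]
      _ = k + visitProb P z (t + 1) k (fun _ => π) x * R := by
          rw [visitProb_succ_stationary hπ, ← add_assoc, hik]

lemma half_le_visitProb_self {T k : ℕ} (hT : 1 ≤ T)
    (hk : k ≤ 1 ∨ 2 * (k : ℝ) ≤ expVisits P π z.1 T z.1) :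
    1 / 2 ≤ visitProb P z T k (fun _ => π) z.1 := by
  rcases Nat.lt_or_ge 1 k with hk1 | hk1
  · have hE := hk.resolve_left (by omega)
    have hE' := expVisits_le_add_visitProb_mul hP hπ le_rfl k z.1 (t := T)
    have hk1' : (1 : ℝ) < k := by exact_mod_cast hk1
    by_contra! hlt
    nlinarith
  · obtain ⟨T, rfl⟩ := Nat.exists_eq_add_of_le' hT
    have hsub : k - 1 = 0 := by omega
    rw [visitProb_succ_stationary hπ, if_pos rfl, hsub, dotProduct]
    simp only [visitProb_zero_right hP, mul_one, (hP _ _).2]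
    norm_num

lemma reachProb_mul_visitProb_le (t T k : ℕ) (x : S) :
    reachProb P π z.1 (t + 1) x * visitProb P z T k (fun _ => π) z.1
      ≤ visitProb P z (t + T) k (fun _ => π) x := by
  induction t generalizing x with
  | zero =>
    rw [reachProb_succ, zero_add]
    split_ifs with hx
    · rw [hx, one_mul]
    · simpa [reachProb, partialGreen] using visitProb_nonneg hP z T k (fun _ => π) x
  | succ t ih =>
    rw [reachProb_succ]
    split_ifs with hx
    · rw [hx, one_mul]
      exact visitProb_mono hP z k _ (Nat.le_add_left T _) z.1
    · set V := visitProb P z T k (fun _ => π) z.1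
      calc P x (π x) ⬝ᵥ reachProb P π z.1 (t + 1) * V
          = P x (π x) ⬝ᵥ (V • reachProb P π z.1 (t + 1)) := by
            rw [dotProduct_smul, smul_eq_mul, mul_comm]
        _ ≤ P x (π x) ⬝ᵥ visitProb P z (t + T) k fun _ => π :=
            dotProduct_le_dotProduct_of_nonneg_left
              (fun y => (mul_comm _ _).trans_le (ih y)) (hP _ _).1
        _ = visitProb P z (t + 1 + T) k (fun _ => π) x := by
            rw [add_right_comm, visitProb_succ_stationary hπ, if_neg hx, tsub_zero]

lemma half_mul_reachProb_le_visitProb {t H k : ℕ} (htH : t + (t + 1) ≤ H)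
    (hk : k ≤ 1 ∨ 2 * (k : ℝ) ≤ expVisits P π z.1 (t + 1) z.1) (x : S) :
    1 / 2 * reachProb P π z.1 (t + 1) x ≤ visitProb P z H k (fun _ => π) x :=
  calc 1 / 2 * reachProb P π z.1 (t + 1) x
      ≤ visitProb P z (t + 1) k (fun _ => π) z.1 * reachProb P π z.1 (t + 1) x :=
        mul_le_mul_of_nonneg_right (half_le_visitProb_self hP hπ (Nat.le_add_left 1 t) hk)
          (reachProb_nonneg hP π z.1 (t + 1) x)
    _ ≤ visitProb P z (t + (t + 1)) k (fun _ => π) x :=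
        (mul_comm _ _).trans_le (reachProb_mul_visitProb_le hP hπ t (t + 1) k x)
    _ ≤ visitProb P z H k (fun _ => π) x := visitProb_mono hP z k _ htH x

end Stationary

lemma one_add_one_div_pow_le_three {T H : ℕ} (hT : T ≤ H) : (1 + 1 / (H : ℝ)) ^ T ≤ 3 :=
  calc (1 + 1 / (H : ℝ)) ^ T ≤ (1 + 1 / (H : ℝ)) ^ H :=
        pow_le_pow_right₀ (le_add_of_nonneg_right (by positivity)) hT
    _ ≤ Real.exp (1 / (H : ℝ)) ^ H := by
        gcongr
        linarith [Real.add_one_le_exp (1 / (H : ℝ))]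
    _ = Real.exp (H * (1 / (H : ℝ))) := (Real.exp_nat_mul _ _).symm
    _ ≤ Real.exp 1 := Real.exp_le_exp.mpr (mul_one_div (H : ℝ) H ▸ div_self_le_one _)
    _ ≤ 3 := Real.exp_one_lt_three.le

section Domination

variable {S A : Type*} [Fintype S] [DecidableEq S] [DecidableEq A]

/- In `6 = 2 * 3`, the factor `3` is the cost `(1 + 1 / H) ^ H ≤ 3` of discounting over `H` steps at
rate `1 / H`. -/
lemma exists_policy_dominating {P : S → A → S → ℝ} (hP : ∀ s a, P s a ∈ stdSimplex ℝ S)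
    {H T : ℕ} (hH : 0 < H) {r : ℝ} (hr : 1 ≤ r)
    (hT : 2 * r ^ Fintype.card S * (1 + 1 / (H : ℝ)) ^ T ≤ (1 + r * (1 / (H : ℝ))) ^ T)
    (z : S × A) (π₀ : ℕ → S → A) :
    ∃ π : S → A, π z.1 = z.2 ∧
      (∀ k ≠ 0, ∀ x, visitProb P z H k π₀ x
        ≤ 6 * r ^ Fintype.card S * reachProb P π z.1 T x) ∧
      ∀ k : ℕ, ∀ x, k * visitProb P z H k π₀ x
        ≤ 6 * r ^ Fintype.card S * expVisits P π z.1 T z.1 := by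
  have hδ : 0 < 1 / (H : ℝ) := by positivity
  have hc : 1 ≤ 1 + 1 / (H : ℝ) := by linarith
  have hc3 := one_add_one_div_pow_le_three (le_refl H)
  set B : Finset A := (range H ×ˢ univ).image fun p => π₀ p.1 p.2
  have hπ₀ : ∀ h < H, ∀ x, π₀ h x ∈ B := fun h hh x =>
    mem_image.mpr ⟨(h, x), by simpa using hh, rfl⟩
  obtain ⟨π, hπ, hB⟩ := exists_policy_reachPotential_superharmonic hP hδ z B
  have hM := isSubstochastic_policyKernel hP π
  have hsingle : 0 ≤ (Pi.single z.1 1 : S → ℝ) := Pi.single_nonneg.mpr zero_le_one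
  refine ⟨π, hπ, fun k hk x => ?_, fun k x => ?_⟩
  · set W := reachPotential P π z.1 (1 / H)
    have hW : 0 ≤ W := reachPotential_nonneg hP hδ π z.1
    have hWz : (1 + 1 / (H : ℝ)) * W z.1 = 1 := reachPotential_self hP hδ π z.1
    have hgreen : W x ≤ 2 * r ^ Fintype.card S * reachProb P π z.1 T x :=
      (hM.updateRow_zero z.1).greenPotential_le_partialGreen hδ hr hsingle hT x
    have hupper := visitProb_le_of_superharmonic hP hc hW hWz.ge hB hk hπ₀ x
    have := mul_le_mul_of_nonneg_right hc3 (hW x)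
    linarith
  · set G := visitPotential P π z.1 (1 / H)
    have hG : 0 ≤ G := visitPotential_nonneg hP hδ π z.1
    have hgreen : G z.1 ≤ 2 * r ^ Fintype.card S * expVisits P π z.1 T z.1 :=
      hM.greenPotential_le_partialGreen hδ hr hsingle hT z.1
    have hupper := mul_visitProb_le_of_superharmonic hP hc hG
      (fun x b hb => visitPotential_superharmonic hP hδ hπ hB x hb) H k hπ₀ x
    have := mul_le_mul_of_nonneg_right hc3 (hG x)
    linarith [visitPotential_le_self hP hδ π z.1 x]

end Domination

section Trajectory

variable {S A : Type}

/-- The state sequence starting at `x` and continuing with `f`. -/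
def consSeq (x : S) (f : ℕ → S) : ℕ → S
  | 0 => x
  | n + 1 => f n

lemma extT_cons (H : ℕ) (x : S) (T : Fin (H + 1) → S) :
    extT (H + 1) (Fin.cons x T : Fin (H + 2) → S) = consSeq x (extT H T) := by
  funext n
  cases n with
  | zero => simp [extT, consSeq]
  | succ n =>
    have hn : (⟨min (n + 1) (H + 1), by omega⟩ : Fin (H + 2)) = Fin.succ ⟨min n H, by omega⟩ := by
      ext; simp
    simp only [extT, consSeq, hn, Fin.cons_succ]

lemma sum_extT_zero [Fintype S] (F : (ℕ → S) → ℝ) :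
    ∑ T : Fin 1 → S, F (extT 0 T) = ∑ x, F fun _ => x :=
  ((Equiv.funUnique (Fin 1) S).symm.sum_comp fun T => F (extT 0 T)).symm

lemma sum_extT_succ [Fintype S] (H : ℕ) (F : (ℕ → S) → ℝ) :
    ∑ T : Fin (H + 2) → S, F (extT (H + 1) T)
      = ∑ x, ∑ T : Fin (H + 1) → S, F (consSeq x (extT H T)) := by
  rw [← (Fin.consEquiv fun _ : Fin (H + 2) => S).sum_comp, Fintype.sum_prod_type]
  exact sum_congr rfl fun x _ => sum_congr rfl fun T _ => congrArg F (extT_cons H x T)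

lemma trajP_consSeq (μ : S → ℝ) (P : S → A → S → ℝ) (π : ℕ → S → A) (H : ℕ) (x : S)
    (f : ℕ → S) :
    trajP μ P π (H + 1) (consSeq x f)
      = μ x * trajP (P x (π 0 x)) P (fun h => π (h + 1)) H f := by
  simp only [trajP, prod_range_succ', consSeq]
  ring

lemma trajP_nonneg [Fintype S] {μ : S → ℝ} {P : S → A → S → ℝ} (hμ : μ ∈ stdSimplex ℝ S)
    (hP : ∀ s a, P s a ∈ stdSimplex ℝ S) (π : ℕ → S → A) (H : ℕ) (f : ℕ → S) :
    0 ≤ trajP μ P π H f :=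
  mul_nonneg (hμ.1 _) (prod_nonneg fun _ _ => (hP _ _).1 _)

lemma sum_trajP [Fintype S] {μ : S → ℝ} {P : S → A → S → ℝ} (hμ : μ ∈ stdSimplex ℝ S)
    (hP : ∀ s a, P s a ∈ stdSimplex ℝ S) (π : ℕ → S → A) (H : ℕ) :
    ∑ T : Fin (H + 1) → S, trajP μ P π H (extT H T) = 1 := by
  induction H generalizing μ π with
  | zero =>
    rw [sum_extT_zero (trajP μ P π 0)]
    simpa [trajP] using hμ.2
  | succ H ih =>
    rw [sum_extT_succ H (trajP μ P π (H + 1))]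
    simp only [trajP_consSeq, ← mul_sum, ih (hP _ _), mul_one, hμ.2]

variable [DecidableEq S] [DecidableEq A]

lemma nVisits_consSeq (π : ℕ → S → A) (H : ℕ) (z : S × A) (x : S) (f : ℕ → S) :
    nVisits π (H + 1) z (consSeq x f)
      = (if (x, π 0 x) = z then 1 else 0) + nVisits (fun h => π (h + 1)) H z f := by
  rw [nVisits, sum_range_succ', add_comm]
  rfl

lemma sum_trajP_le_nVisits [Fintype S] (μ : S → ℝ) (P : S → A → S → ℝ) (z : S × A) (H k : ℕ)
    (π : ℕ → S → A) :
    ∑ T : Fin (H + 1) → S,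
      (if k ≤ nVisits π H z (extT H T) then trajP μ P π H (extT H T) else 0)
        = μ ⬝ᵥ visitProb P z H k π := by
  induction H generalizing μ k π with
  | zero =>
    rw [sum_extT_zero fun f => if k ≤ nVisits π 0 z f then trajP μ P π 0 f else 0]
    simp [nVisits, trajP, visitProb, dotProduct]
  | succ H ih =>
    rw [sum_extT_succ H fun f => if k ≤ nVisits π (H + 1) z f then trajP μ P π (H + 1) f else 0]
    refine sum_congr rfl fun x _ => ?_
    simp only [nVisits_consSeq, trajP_consSeq, ← tsub_le_iff_left, ← mul_ite_zero, ← mul_sum, ih,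
      visitProb]

end Trajectory

section Quantile

lemma bddAbove_setOf_le_prob {Ω : Type*} [Fintype Ω] (p X : Ω → ℝ) {d : ℝ} (hd : 0 < d) :
    BddAbove {x : ℝ | d ≤ ∑ ω, if x ≤ X ω then p ω else 0} := by
  refine ⟨∑ ω, |X ω|, fun x hx => ?_⟩
  obtain ⟨ω, -, hω⟩ := exists_ne_zero_of_sum_ne_zero (hd.trans_le hx).ne'
  have hxω : x ≤ X ω := by
    by_contra h
    exact hω (if_neg h)
  exact hxω.trans ((le_abs_self _).trans
    (single_le_sum (fun ω _ => abs_nonneg (X ω)) (mem_univ ω)))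

lemma le_prob_of_le_sSup {Ω : Type*} [Fintype Ω] {p : Ω → ℝ} (hp : ∀ ω, 0 ≤ p ω) (N : Ω → ℕ)
    {d : ℝ} (hd : d ≤ ∑ ω, p ω) {m : ℕ}
    (hm : (m : ℝ) ≤ sSup {x : ℝ | d ≤ ∑ ω, if x ≤ N ω then p ω else 0}) :
    d ≤ ∑ ω, if m ≤ N ω then p ω else 0 := by
  have hne : {x : ℝ | d ≤ ∑ ω, if x ≤ N ω then p ω else 0}.Nonempty := ⟨0, by simpa using hd⟩
  obtain ⟨x, hx, hmx⟩ := exists_lt_of_lt_csSup hne ((sub_one_lt (m : ℝ)).trans_le hm)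
  refine (Set.mem_ofPred.mp hx).trans (sum_le_sum fun ω _ => ?_)
  split_ifs with hxω hmω hmω
  · exact le_rfl
  · refine absurd (hmx.trans_le hxω) (not_lt.mpr ?_)
    have : (N ω : ℝ) + 1 ≤ m := by exact_mod_cast not_le.mp hmω
    linarith
  · exact hp ω
  · exact le_rfl

lemma sum_pi_prod_indicator {ι Ω : Type*} [Fintype ι] [DecidableEq ι] [Fintype Ω]
    {p : ι → Ω → ℝ} (hp : ∀ i, ∑ ω, p i ω = 1) (i₀ : ι) (E : Ω → Prop) [DecidablePred E] :
    ∑ ω : ι → Ω, (if E (ω i₀) then ∏ i, p i (ω i) else 0) = ∑ ω, if E ω then p i₀ ω else 0 := by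
  have hmul : ∀ ω : ι → Ω, (if E (ω i₀) then ∏ i, p i (ω i) else 0)
      = ∏ i, (if i = i₀ then (if E (ω i) then 1 else 0) else 1) * p i (ω i) := fun ω => by
    rw [prod_mul_distrib, prod_ite_eq' univ i₀ fun i => if E (ω i) then (1 : ℝ) else 0]
    simp
  simp only [hmul]
  rw [← Fintype.piFinset_univ, ← prod_univ_sum (fun _ => univ)
      fun i t => (if i = i₀ then (if E t then 1 else 0) else 1) * p i t,
    prod_eq_single i₀ (fun i _ hi => by simp [hi, hp]) (by simp)]
  simp

end Quantile

section Switched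

variable {S A : Type} [DecidableEq S] [DecidableEq A]

lemma swAct_self (z : S × A) (π : S → A) (f : ℕ → S) (n : ℕ) : swAct z π π f n = π (f n) := by
  rw [swAct, ite_self]

lemma swProb_self (μ : S → ℝ) (P : S → A → S → ℝ) (z : S × A) (π : S → A) (H : ℕ) (f : ℕ → S) :
    swProb μ P z π π H f = trajP μ P (fun _ => π) H f := by
  simp only [swProb, trajP, swAct_self]

lemma swVisits_self (z z' : S × A) (π : S → A) (H : ℕ) (f : ℕ → S) :
    swVisits z π π H z' f = nVisits (fun _ => π) H z' f := by
  simp only [swVisits, nVisits, swAct_self]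

lemma swAct_consSeq_succ (z : S × A) (π₁ π₂ : S → A) (x : S) (f : ℕ → S) (n : ℕ) :
    swAct z π₁ π₂ (consSeq x f) (n + 1)
      = swAct z (if (x, π₁ x) = z then π₂ else π₁) π₂ f n := by
  split_ifs with hx
  · have hvisited : swVisited z π₁ π₂ (consSeq x f) (n + 1) = true := by
      induction n with
      | zero => simp [swVisited, consSeq, hx]
      | succ n ih => rw [swVisited, ih, Bool.true_or]
    rw [swAct_self, swAct, if_pos hvisited, consSeq]
  · have hvisited : swVisited z π₁ π₂ (consSeq x f) (n + 1) = swVisited z π₁ π₂ f n := by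
      induction n with
      | zero => simp [swVisited, consSeq, hx]
      | succ n ih => rw [swVisited, ih, swVisited, consSeq]
    rw [swAct, swAct, hvisited, consSeq]

lemma swProb_consSeq (μ : S → ℝ) (P : S → A → S → ℝ) (z : S × A) (π₁ π₂ : S → A) (H : ℕ) (x : S)
    (f : ℕ → S) :
    swProb μ P z π₁ π₂ (H + 1) (consSeq x f)
      = μ x * swProb (P x (π₁ x)) P z (if (x, π₁ x) = z then π₂ else π₁) π₂ H f := by
  have hzero : swAct z π₁ π₂ (consSeq x f) 0 = π₁ x := rfl
  simp only [swProb, prod_range_succ', swAct_consSeq_succ, hzero, consSeq]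
  ring

variable [Fintype S] {μ : S → ℝ} (hμ : μ ∈ stdSimplex ℝ S) {P : S → A → S → ℝ}
  (hP : ∀ s a, P s a ∈ stdSimplex ℝ S)
include hμ hP

lemma swProb_nonneg (z : S × A) (π₁ π₂ : S → A) (H : ℕ) (f : ℕ → S) :
    0 ≤ swProb μ P z π₁ π₂ H f :=
  mul_nonneg (hμ.1 _) (prod_nonneg fun _ _ => (hP _ _).1 _)

lemma sum_swProb (z : S × A) (π₁ π₂ : S → A) (H : ℕ) :
    ∑ T : Fin (H + 1) → S, swProb μ P z π₁ π₂ H (extT H T) = 1 := by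
  induction H generalizing μ π₁ with
  | zero =>
    rw [sum_extT_zero (swProb μ P z π₁ π₂ 0)]
    simpa [swProb] using hμ.2
  | succ H ih =>
    rw [sum_extT_succ H (swProb μ P z π₁ π₂ (H + 1))]
    simp only [swProb_consSeq, ← mul_sum, ih (hP _ _), mul_one, hμ.2]

/- The collection contains the trajectory with `π₁ = π₂ = π`, which alone accounts for the
left-hand side. -/
lemma quantNS_le_Qst [Fintype A] (π : S → A) (H : ℕ) (z : S × A) {d : ℝ} (hd0 : 0 < d)
    (hd1 : d ≤ 1) :
    quantNS μ P (fun _ => π) H (fun f => (nVisits (fun _ => π) H z f : ℝ)) d ≤ Qst μ P H z d := by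
  refine csSup_le_csSup (bddAbove_setOf_le_prob _ _ hd0)
    ⟨0, by simpa [sum_trajP hμ hP] using hd1⟩ fun x hx =>
      Set.mem_ofPred.mpr (le_trans (Set.mem_ofPred.mp hx) ?_)
  have hmarginal := sum_pi_prod_indicator
    (p := fun (i : (S × A) × (S → A) × (S → A)) (T : Fin (H + 1) → S) =>
      swProb μ P i.1 i.2.1 i.2.2 H (extT H T))
    (fun i => sum_swProb hμ hP i.1 i.2.1 i.2.2 H) (z, π, π)
    (fun T => x ≤ (nVisits (fun _ => π) H z (extT H T) : ℝ))
  simp only [swProb_self] at hmarginal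
  rw [← hmarginal]
  refine sum_le_sum fun ω _ => ?_
  have hjoint : 0 ≤ jointProb μ P H ω := prod_nonneg fun _ _ => swProb_nonneg hμ hP _ _ _ _ _
  have hvisits : nVisits (fun _ => π) H z (extT H (ω (z, π, π))) ≤ totalVisits H z ω := by
    rw [← swVisits_self z z]
    exact single_le_sum (f := fun i : (S × A) × (S → A) × (S → A) =>
      swVisits i.1 i.2.1 i.2.2 H z (extT H (ω i))) (fun _ _ => Nat.zero_le _)
      (mem_univ (z, π, π))
  by_cases hx : x ≤ (nVisits (fun _ => π) H z (extT H (ω (z, π, π))) : ℝ)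
  · rw [if_pos hx, if_pos (hx.trans (by exact_mod_cast hvisits))]
    rfl
  · rw [if_neg hx]
    split_ifs
    exacts [hjoint, le_rfl]

end Switched

section Horizon

lemma exp_three_halves_le : Real.exp (3 / 2) ≤ 9 / 2 := by
  have hsq : Real.exp (3 / 2) ^ 2 = Real.exp 1 ^ 3 := by
    rw [← Real.exp_nat_mul, ← Real.exp_nat_mul]
    norm_num
  refine le_of_sq_le_sq ?_ (by norm_num)
  calc Real.exp (3 / 2) ^ 2 = Real.exp 1 ^ 3 := hsq
    _ ≤ 2.7182818286 ^ 3 := pow_le_pow_left₀ (Real.exp_pos 1).le Real.exp_one_lt_d9.le 3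
    _ ≤ (9 / 2) ^ 2 := by norm_num

lemma exp_three_halves_mul_le_one_add_div_pow {a L : ℝ} {H T : ℕ} (hL : 0 < L) (hLH : 2 * L ≤ H)
    (hLa : 7 * L ≤ a) (hHT : H ≤ 2 * T) :
    Real.exp (3 / 2 * L) ≤ (1 + a * (1 / (H : ℝ))) ^ T := by
  have hH : (0 : ℝ) < H := by linarith
  have ha : 0 < a * (1 / (H : ℝ)) := mul_pos (by linarith) (by positivity)
  have hHT' : (H : ℝ) / (2 * L) * L ≤ T := by
    have : (H : ℝ) ≤ 2 * T := by exact_mod_cast hHT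
    rw [div_mul_eq_mul_div, mul_div_mul_right _ _ hL.ne']
    linarith
  have hbase : Real.exp (3 / 2) ≤ (1 + a * (1 / (H : ℝ))) ^ ((H : ℝ) / (2 * L)) :=
    calc Real.exp (3 / 2) ≤ 9 / 2 := exp_three_halves_le
      _ ≤ 1 + a / (2 * L) := by
        have : 7 / 2 ≤ a / (2 * L) := by
          rw [div_le_div_iff₀ (by norm_num) (by positivity)]
          linarith
        linarith
      _ = 1 + H / (2 * L) * (a * (1 / (H : ℝ))) := by field_simp
      _ ≤ (1 + a * (1 / (H : ℝ))) ^ ((H : ℝ) / (2 * L)) :=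
        one_add_mul_self_le_rpow_one_add (by linarith) ((one_le_div (by positivity)).mpr hLH)
  calc Real.exp (3 / 2 * L) = Real.exp (3 / 2) ^ L := Real.exp_mul _ _
    _ ≤ ((1 + a * (1 / (H : ℝ))) ^ ((H : ℝ) / (2 * L))) ^ L :=
      Real.rpow_le_rpow (Real.exp_pos _).le hbase hL.le
    _ = (1 + a * (1 / (H : ℝ))) ^ ((H : ℝ) / (2 * L) * L) :=
      (Real.rpow_mul (by linarith) _ _).symm
    _ ≤ (1 + a * (1 / (H : ℝ))) ^ (T : ℝ) := Real.rpow_le_rpow_of_exponent_le (by linarith) hHT'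
    _ = (1 + a * (1 / (H : ℝ))) ^ T := Real.rpow_natCast _ _

lemma log_eight_mul_succ_pow (n : ℕ) :
    Real.log (8 * ((n : ℝ) + 1) ^ (4 * (n + 1)))
      = 3 * Real.log 2 + 4 * ((n + 1) * Real.log (n + 1)) := by
  rw [Real.log_mul (by norm_num) (by positivity), Real.log_pow, show (8 : ℝ) = 2 ^ 3 by norm_num,
    Real.log_pow]
  push_cast
  ring

lemma log_eight_mul_succ_pow_pos (n : ℕ) :
    0 < Real.log (8 * ((n : ℝ) + 1) ^ (4 * (n + 1))) := by
  have hn : (1 : ℝ) ≤ ((n : ℝ) + 1) ^ (4 * (n + 1)) := one_le_pow₀ (by simp)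
  exact Real.log_pos (by linarith)

lemma seven_mul_log_eight_mul_succ_pow_le {n : ℕ} (hn : 1 ≤ n) :
    7 * Real.log (8 * ((n : ℝ) + 1) ^ (4 * (n + 1))) ≤ ((n : ℝ) + 1) ^ 6 := by
  have hlog2 := Real.log_two_lt_d9
  rw [log_eight_mul_succ_pow]
  rcases hn.eq_or_lt with rfl | hn2
  · norm_num
    linarith
  · set N : ℝ := n + 1
    have hN : 3 ≤ N := by
      have : (2 : ℝ) ≤ n := by exact_mod_cast hn2
      simp only [N]
      linarith
    have hlog : N * Real.log N ≤ N * (N - 1) :=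
      mul_le_mul_of_nonneg_left (Real.log_le_sub_one_of_pos (by linarith)) (by linarith)
    have hpow : 81 * N ^ 2 ≤ N ^ 6 :=
      calc 81 * N ^ 2 = 3 ^ 4 * N ^ 2 := by norm_num
        _ ≤ N ^ 4 * N ^ 2 := by gcongr
        _ = N ^ 6 := by ring
    nlinarith

lemma six_mul_succ_pow_le_exp (n : ℕ) :
    6 * (((n : ℝ) + 1) ^ 6) ^ n
      ≤ Real.exp (3 / 2 * Real.log (8 * ((n : ℝ) + 1) ^ (4 * (n + 1)))) := by
  set N : ℝ := n + 1
  set L : ℝ := Real.log (8 * N ^ (4 * (n + 1)))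
  have hN : 1 ≤ N := by simp [N]
  refine le_of_sq_le_sq ?_ (Real.exp_pos _).le
  calc (6 * (N ^ 6) ^ n) ^ 2 = 36 * N ^ (12 * n) := by
        rw [← pow_mul]
        ring
    _ ≤ 512 * N ^ (12 * n + 12) := by
        gcongr
        · norm_num
        · omega
    _ = (8 * N ^ (4 * (n + 1))) ^ 3 := by ring
    _ = Real.exp L ^ 3 := by rw [Real.exp_log (by positivity)]
    _ = Real.exp (3 / 2 * L) ^ 2 := by
        rw [← Real.exp_nat_mul, ← Real.exp_nat_mul]
        congr 1
        push_cast
        ring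

lemma two_mul_succ_pow_mul_le_one_add_div_pow {n H T : ℕ} (hn : 1 ≤ n)
    (hH : 2 * Real.log (8 * ((n : ℝ) + 1) ^ (4 * (n + 1))) ≤ H) (hHT : H ≤ 2 * T) (hTH : T ≤ H) :
    2 * (((n : ℝ) + 1) ^ 6) ^ n * (1 + 1 / (H : ℝ)) ^ T
      ≤ (1 + ((n : ℝ) + 1) ^ 6 * (1 / (H : ℝ))) ^ T :=
  calc 2 * (((n : ℝ) + 1) ^ 6) ^ n * (1 + 1 / (H : ℝ)) ^ T
      ≤ 2 * (((n : ℝ) + 1) ^ 6) ^ n * 3 := by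
        gcongr
        exact one_add_one_div_pow_le_three hTH
    _ = 6 * (((n : ℝ) + 1) ^ 6) ^ n := by ring
    _ ≤ Real.exp (3 / 2 * Real.log (8 * ((n : ℝ) + 1) ^ (4 * (n + 1)))) :=
        six_mul_succ_pow_le_exp n
    _ ≤ (1 + ((n : ℝ) + 1) ^ 6 * (1 / (H : ℝ))) ^ T :=
        exp_three_halves_mul_le_one_add_div_pow (log_eight_mul_succ_pow_pos n) hH
          (seven_mul_log_eight_mul_succ_pow_le hn) hHT

lemma succ_pow_six_pow_le {n : ℕ} (hn : 1 ≤ n) :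
    (((n : ℝ) + 1) ^ 6) ^ n ≤ 64 * (n : ℝ) ^ (12 * n) := by
  rcases hn.eq_or_lt with rfl | hn2
  · norm_num
  · have hsq : (n : ℝ) + 1 ≤ (n : ℝ) ^ 2 := by
      have : (2 : ℝ) ≤ n := by exact_mod_cast hn2
      nlinarith
    calc (((n : ℝ) + 1) ^ 6) ^ n ≤ (((n : ℝ) ^ 2) ^ 6) ^ n := by gcongr
      _ = (n : ℝ) ^ (12 * n) := by
        rw [← pow_mul, ← pow_mul]
        ring_nf
      _ ≤ 64 * (n : ℝ) ^ (12 * n) := le_mul_of_one_le_left (by positivity) (by norm_num)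

end Horizon

section VisitQuantile

variable {S A : Type} [Fintype S] [DecidableEq S] [DecidableEq A] {μ : S → ℝ}
  {P : S → A → S → ℝ} {z : S × A} {H : ℕ} {d : ℝ}

lemma le_quantNS_of_le_visitProb {π : ℕ → S → A} {k : ℕ} (hd : 0 < d)
    (hk : d ≤ μ ⬝ᵥ visitProb P z H k π) :
    (k : ℝ) ≤ quantNS μ P π H (fun f => (nVisits π H z f : ℝ)) d := by
  refine le_csSup (bddAbove_setOf_le_prob _ _ hd) ?_
  simpa only [Set.mem_ofPred, Nat.cast_le, sum_trajP_le_nVisits] using hk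

variable (hμ : μ ∈ stdSimplex ℝ S) (hP : ∀ s a, P s a ∈ stdSimplex ℝ S)
include hμ hP

lemma le_visitProb_of_le_quantNS {π : ℕ → S → A} {k : ℕ} (hd : d ≤ 1)
    (hk : (k : ℝ) ≤ quantNS μ P π H (fun f => (nVisits π H z f : ℝ)) d) :
    d ≤ μ ⬝ᵥ visitProb P z H k π := by
  rw [← sum_trajP_le_nVisits]
  exact le_prob_of_le_sSup (fun _ => trajP_nonneg hμ hP π H _)
    (fun T => nVisits π H z (extT H T)) (by rwa [sum_trajP hμ hP]) hk

lemma le_quantNS_of_four_mul_le_expVisits {π : S → A} (hπ : π z.1 = z.2) {t : ℕ}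
    (htH : t + (t + 1) ≤ H) {x : ℝ} (hx : 4 * x ≤ expVisits P π z.1 (t + 1) z.1) (hd0 : 0 < d)
    (hd : d ≤ 1 / 2 * (μ ⬝ᵥ reachProb P π z.1 (t + 1))) :
    x ≤ quantNS μ P (fun _ => π) H (fun f => (nVisits (fun _ => π) H z f : ℝ)) d := by
  have hceil : ⌈x⌉₊ ≤ 1 ∨ 2 * (⌈x⌉₊ : ℝ) ≤ expVisits P π z.1 (t + 1) z.1 := by
    rcases le_or_gt x 1 with hx1 | hx1
    · exact Or.inl (Nat.ceil_le.mpr (by exact_mod_cast hx1))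
    · exact Or.inr (by linarith [Nat.ceil_lt_add_one (zero_le_one.trans hx1.le)])
  refine (Nat.le_ceil x).trans (le_quantNS_of_le_visitProb hd0 (hd.trans ?_))
  calc 1 / 2 * (μ ⬝ᵥ reachProb P π z.1 (t + 1))
      = μ ⬝ᵥ ((1 / 2 : ℝ) • reachProb P π z.1 (t + 1)) := by rw [dotProduct_smul, smul_eq_mul]
    _ ≤ μ ⬝ᵥ visitProb P z H ⌈x⌉₊ fun _ => π :=
      dotProduct_le_dotProduct_of_nonneg_left
        (half_mul_reachProb_le_visitProb hP hπ htH hceil) hμ.1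

lemma exists_policy_le_reachProb_and_expVisits {T m : ℕ} {r ε : ℝ} (hH : 0 < H) (hr : 1 ≤ r)
    (hT : 2 * r ^ Fintype.card S * (1 + 1 / (H : ℝ)) ^ T ≤ (1 + r * (1 / (H : ℝ))) ^ T)
    {π₀ : ℕ → S → A} (hm : m ≠ 0) (hπ₀ : ε ≤ μ ⬝ᵥ visitProb P z H m π₀) :
    ∃ π : S → A, π z.1 = z.2 ∧
      ε ≤ 6 * r ^ Fintype.card S * (μ ⬝ᵥ reachProb P π z.1 T) ∧
      ε * m ≤ 6 * r ^ Fintype.card S * expVisits P π z.1 T z.1 := by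
  obtain ⟨π, hπ, hreach, hvisits⟩ := exists_policy_dominating hP hH hr hT z π₀
  refine ⟨π, hπ, ?_, ?_⟩
  · calc ε ≤ μ ⬝ᵥ visitProb P z H m π₀ := hπ₀
      _ ≤ μ ⬝ᵥ ((6 * r ^ Fintype.card S) • reachProb P π z.1 T) :=
        dotProduct_le_dotProduct_of_nonneg_left (hreach m hm) hμ.1
      _ = 6 * r ^ Fintype.card S * (μ ⬝ᵥ reachProb P π z.1 T) := by
        rw [dotProduct_smul, smul_eq_mul]
  · calc ε * m ≤ (μ ⬝ᵥ visitProb P z H m π₀) * m :=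
        mul_le_mul_of_nonneg_right hπ₀ m.cast_nonneg
      _ = μ ⬝ᵥ ((m : ℝ) • visitProb P z H m π₀) := by
        rw [dotProduct_smul, smul_eq_mul, mul_comm]
      _ ≤ 6 * r ^ Fintype.card S * expVisits P π z.1 T z.1 :=
        dotProduct_le_of_mem_stdSimplex hμ (hvisits m)

end VisitQuantile

lemma div_mul_succ_pow_le_div (n : ℕ) {ε : ℝ} (hε : 0 ≤ ε) :
    ε / (1024 * ((n : ℝ) + 1) ^ (12 * (n + 1))) ≤ ε / (12 * (((n : ℝ) + 1) ^ 6) ^ n) := by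
  rw [← pow_mul]
  gcongr
  · norm_num
  · simp
  · norm_num
  · exact Nat.le_succ n

lemma div_mul_succ_pow_le_one (n : ℕ) {ε : ℝ} (hε : ε ≤ 1) :
    ε / (1024 * ((n : ℝ) + 1) ^ (12 * (n + 1))) ≤ 1 := by
  have hn : (1 : ℝ) ≤ ((n : ℝ) + 1) ^ (12 * (n + 1)) := one_le_pow₀ (by simp)
  exact div_le_one_of_le₀ (by linarith) (by positivity)

lemma four_mul_div_le {n : ℕ} (hn : 1 ≤ n) {y R : ℝ} (hR : 0 ≤ R)
    (hy : y ≤ 6 * (((n : ℝ) + 1) ^ 6) ^ n * R) :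
    4 * (1 / (4096 * (n : ℝ) ^ (12 * n)) * y) ≤ R := by
  have hD : 0 < (n : ℝ) ^ (12 * n) := by positivity
  calc 4 * (1 / (4096 * (n : ℝ) ^ (12 * n)) * y) = y / (1024 * (n : ℝ) ^ (12 * n)) := by
        field_simp
        ring
    _ ≤ R := (div_le_iff₀ (by positivity)).mpr ?_
  calc y ≤ 6 * (((n : ℝ) + 1) ^ 6) ^ n * R := hy
    _ ≤ 6 * (64 * (n : ℝ) ^ (12 * n)) * R := by
      gcongr
      exact succ_pow_six_pow_le hn
    _ ≤ R * (1024 * (n : ℝ) ^ (12 * n)) := by nlinarith [mul_nonneg hD.le hR]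

theorem stmt18_general {S A : Type} [Fintype S] [DecidableEq S] [DecidableEq A] {μ : S → ℝ}
    {P : S → A → S → ℝ} (hμ : μ ∈ stdSimplex ℝ S) (hP : ∀ s a, P s a ∈ stdSimplex ℝ S) {H : ℕ}
    (hH : 2 * Real.log (8 * ((Fintype.card S : ℝ) + 1) ^ (4 * (Fintype.card S + 1))) ≤ H)
    {ε : ℝ} (hε0 : 0 < ε) (hε1 : ε ≤ 1) (z : S × A) {m : ℕ} (π₀ : ℕ → S → A)
    (hm : (m : ℝ) ≤ quantNS μ P π₀ H (fun f => (nVisits π₀ H z f : ℝ)) ε) :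
    ∃ π : S → A, 1 / (4096 * (Fintype.card S : ℝ) ^ (12 * Fintype.card S)) * ε * m ≤
      quantNS μ P (fun _ => π) H (fun f => (nVisits (fun _ => π) H z f : ℝ))
        (ε / (1024 * ((Fintype.card S : ℝ) + 1) ^ (12 * (Fintype.card S + 1)))) := by
  have hd0 : 0 < ε / (1024 * ((Fintype.card S : ℝ) + 1) ^ (12 * (Fintype.card S + 1))) := by
    positivity
  have hprob : ε ≤ μ ⬝ᵥ visitProb P z H m π₀ := le_visitProb_of_le_quantNS hμ hP hε1 hm
  rcases eq_or_ne m 0 with rfl | hm0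
  · refine ⟨fun _ => z.2, ?_⟩
    rw [Nat.cast_zero, mul_zero, ← Nat.cast_zero]
    refine le_quantNS_of_le_visitProb hd0 ?_
    simpa [dotProduct, visitProb_zero_right hP, hμ.2] using div_mul_succ_pow_le_one _ hε1
  have hr : 1 ≤ ((Fintype.card S : ℝ) + 1) ^ 6 := one_le_pow₀ (by simp)
  have hn : 1 ≤ Fintype.card S := Fintype.card_pos_iff.mpr ⟨z.1⟩
  have hH0 : 0 < H := by
    have : (0 : ℝ) < H := by linarith [log_eight_mul_succ_pow_pos (Fintype.card S)]
    exact_mod_cast this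
  obtain ⟨t, hHt, htH⟩ : ∃ t, H ≤ 2 * (t + 1) ∧ t + (t + 1) ≤ H :=
    ⟨(H - 1) / 2, by omega, by omega⟩
  obtain ⟨π, hπ, hreach, hvisits⟩ := exists_policy_le_reachProb_and_expVisits hμ hP hH0 hr
    (two_mul_succ_pow_mul_le_one_add_div_pow hn hH hHt (by omega)) hm0 hprob
  refine ⟨π, le_quantNS_of_four_mul_le_expVisits hμ hP hπ htH ?_ hd0 ?_⟩
  · rw [mul_assoc (1 / _)]
    exact four_mul_div_le hn (expVisits_nonneg hP π z.1 (t + 1) z.1) hvisits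
  · refine (div_mul_succ_pow_le_div (Fintype.card S) hε0.le).trans ?_
    rw [div_le_iff₀ (by positivity)]
    linarith

theorem stmt18 {S A : Type} [Fintype S] [Fintype A] [DecidableEq S] [DecidableEq A]
    (μ : S → ℝ) (P : S → A → S → ℝ)
    (hμ0 : ∀ s, 0 ≤ μ s) (hμ1 : ∑ s, μ s = 1)
    (hP0 : ∀ s a s', 0 ≤ P s a s') (hP1 : ∀ s a, ∑ s', P s a s' = 1)
    (H : ℕ)
    (hH : 2 * Real.log (8 * ((Fintype.card S : ℝ) + 1) ^ (4 * (Fintype.card S + 1))) ≤ (H : ℝ))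
    (ε : ℝ) (hε0 : 0 < ε) (hε1 : ε ≤ 1)
    (m : S × A → ℕ)
    -- `m z` is the largest integer such that some (possibly non-stationary) policy visits `z`
    -- at least `m z` times with probability at least `ε`
    (hm1 : ∀ z : S × A, ∃ π : ℕ → S → A,
      (m z : ℝ) ≤ quantNS μ P π H (fun f => (nVisits π H z f : ℝ)) ε)
    (hm2 : ∀ (z : S × A) (k : ℕ),
      (∃ π : ℕ → S → A, (k : ℝ) ≤ quantNS μ P π H (fun f => (nVisits π H z f : ℝ)) ε) →
      k ≤ m z) :
    ∀ z : S × A,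
      (1 / (4096 * (Fintype.card S : ℝ) ^ (12 * Fintype.card S))) * ε * (m z : ℝ) ≤
        Qst μ P H z
          (ε / (1024 * ((Fintype.card S : ℝ) + 1) ^ (12 * (Fintype.card S + 1)))) := by
  intro z
  have hμ : μ ∈ stdSimplex ℝ S := ⟨hμ0, hμ1⟩
  have hP : ∀ s a, P s a ∈ stdSimplex ℝ S := fun s a => ⟨hP0 s a, hP1 s a⟩
  obtain ⟨π₀, hπ₀⟩ := hm1 z
  obtain ⟨π, hπ⟩ := stmt18_general hμ hP hH hε0 hε1 z π₀ hπ₀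
  exact hπ.trans (quantNS_le_Qst hμ hP π H z (by positivity) (div_mul_succ_pow_le_one _ hε1))
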